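/- Let A>0, B>0, let n≥2 be an integer, and let x_n∈(−∞,0) be any zero of ζ_n. Set 𝒫_n(x)=n/(n+1)+x·(−n/(n+2)+(A+2B)/(A(n+1))). Then: (1) 𝒫_n(x_n)<0; (2) if x_n∈(−1,0), then x_n>x_⋆, where x_⋆=−((2n+1)/(2(n+1)))·((A+2B)/(A(n+1))−(n+1)/(n+2))^{−1}; and (3) x_n<−A/(2B). -/

import Mathlib

open MeasureTheory Real Set

/-- Rising factorial (Pochhammer symbol) `(a)_k`. -/
noncomputable def poch (a : ℝ) (k : ℕ) : ℝ := (ascPochhammer ℝ k).eval a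

/-- Gauss hypergeometric function `F(a,b;c;x)`: given by Euler's integral representation
when `c > b > 0` (valid for all `x ∈ (-∞,1]`), and by the defining power series otherwise. -/
noncomputable def hyper (a b c x : ℝ) : ℝ :=
  if b < c ∧ 0 < b then
    Real.Gamma c / (Real.Gamma b * Real.Gamma (c - b)) *
      ∫ t in (0:ℝ)..1, t ^ (b - 1) * (1 - t) ^ (c - b - 1) * (1 - x * t) ^ (-a)
  else
    ∑' k : ℕ, poch a k * poch b k / (poch c k * (Nat.factorial k)) * x ^ k

/-- The coefficient `a_t = (t - √(t²+8))/2`. -/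
noncomputable def aCoef (t : ℝ) : ℝ := (t - Real.sqrt (t ^ 2 + 8)) / 2

/-- The coefficient `b_t = (t + √(t²+8))/2`. -/
noncomputable def bCoef (t : ℝ) : ℝ := (t + Real.sqrt (t ^ 2 + 8)) / 2

/-- `F_t(x) = F(a_t, b_t; t+1; x)`. -/
noncomputable def Fhyp (t x : ℝ) : ℝ := hyper (aCoef t) (bCoef t) (t + 1) x

/-- The dispersion function `ζ_n` associated with the quadratic profile `f₀(r) = Ar² + B`. -/
noncomputable def zetaDisp (A B : ℝ) (n : ℕ) (x : ℝ) : ℝ :=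
  Fhyp n x * (1 - x + (A + 2 * B) / (A * ((n : ℝ) + 1)) * x)
    + ∫ τ in (0:ℝ)..1, Fhyp n (τ * x) * τ ^ n * (-1 + 2 * x * τ)

/-!
For `n ≥ 2` Euler's integral applies with `0 < -a_n < 1`, so `F_n` is positive and strictly
decreasing on `(-∞, 1)`, and `F_n(x) < (1 - x)^(-a_n) F_n(0) < 2 F_n(0)` for `-1 < x < 0`. Thus
`F_n(τx) < F_n(x)` for `x < 0` and `0 < τ < 1`, and `F_n(x) / 2 < F_n(τx)` if moreover `-1 < x`.
The kernel `τⁿ(-1 + 2xτ)` being negative, inserting these bounds in the integral gives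

  `F_n(x) 𝒫_n(x) < ζ_n(x)` on `(-∞, 0)`   and   `ζ_n(x) < F_n(x) 𝒬_n(x)` on `(-1, 0)`,

where `𝒬_n` is affine with root `x_⋆`. Hence `𝒫_n < 0` at every negative zero of `ζ_n`, and
`𝒬_n > 0` at those in `(-1, 0)`. Since `n(n+1) ≥ n + 2`, the inequality `𝒫_n(x) < 0` with `x < 0`
forces `n + 2(B/A)x < 0`, whence `x < -A/(2B)`.
-/

theorem intervalIntegral_lt_of_lt_on_Ioo {f g : ℝ → ℝ} {a b : ℝ} (hab : a < b)
    (hf : IntervalIntegrable f volume a b) (hg : IntervalIntegrable g volume a b)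
    (h : ∀ t ∈ Ioo a b, f t < g t) : ∫ t in a..b, f t < ∫ t in a..b, g t := by
  rw [← sub_pos, ← intervalIntegral.integral_sub hg hf]
  exact intervalIntegral.intervalIntegral_pos_of_pos_on (hg.sub hf)
    (fun t ht => sub_pos.2 (h t ht)) hab

theorem intervalIntegrable_rpow_mul_one_sub_rpow {b d : ℝ} (hb : 0 < b) (hd : 0 < d) :
    IntervalIntegrable (fun t : ℝ => t ^ (b - 1) * (1 - t) ^ (d - 1)) volume 0 1 := by
  have hbeta := Complex.betaIntegral_convergent (u := b) (v := d) hb hd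
  rw [intervalIntegrable_iff_integrableOn_Ioc_of_le zero_le_one] at hbeta ⊢
  refine IntegrableOn.congr_fun (Integrable.re hbeta) (fun t ht => ?_) measurableSet_Ioc
  have hleft : (t : ℂ) ^ ((b : ℂ) - 1) = ((t ^ (b - 1) : ℝ) : ℂ) := by
    rw [Complex.ofReal_cpow ht.1.le, Complex.ofReal_sub, Complex.ofReal_one]
  have hright : (1 - (t : ℂ)) ^ ((d : ℂ) - 1) = (((1 - t) ^ (d - 1) : ℝ) : ℂ) := by
    rw [Complex.ofReal_cpow (sub_nonneg.2 ht.2)]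
    push_cast
    rfl
  simp only [hleft, hright, ← Complex.ofReal_mul, RCLike.re_to_complex, Complex.ofReal_re]

theorem one_sub_mul_pos {x t : ℝ} (hx : x < 1) (ht : t ∈ Icc (0 : ℝ) 1) : 0 < 1 - x * t := by
  rcases ht.1.eq_or_lt with rfl | ht_pos
  · simp
  · linarith [mul_lt_mul_of_pos_right hx ht_pos, ht.2]

section Hypergeometric

variable {a b c x : ℝ}

theorem intervalIntegrable_euler (p : ℝ) (hb : 0 < b) (hbc : b < c) (hx : x < 1) :
    IntervalIntegrable (fun t : ℝ => t ^ (b - 1) * (1 - t) ^ (c - b - 1) * (1 - x * t) ^ p)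
      volume 0 1 := by
  refine (intervalIntegrable_rpow_mul_one_sub_rpow hb (sub_pos.2 hbc)).mul_continuousOn ?_
  refine ContinuousOn.rpow_const (by fun_prop) fun t ht => Or.inl ?_
  rw [uIcc_of_le zero_le_one] at ht
  exact (one_sub_mul_pos hx ht).ne'

theorem euler_weight_pos {t : ℝ} (b c : ℝ) (ht : t ∈ Ioo (0 : ℝ) 1) :
    0 < t ^ (b - 1) * (1 - t) ^ (c - b - 1) :=
  mul_pos (rpow_pos_of_pos ht.1 _) (rpow_pos_of_pos (sub_pos.2 ht.2) _)

theorem euler_factor_pos (hb : 0 < b) (hbc : b < c) :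
    0 < Real.Gamma c / (Real.Gamma b * Real.Gamma (c - b)) :=
  div_pos (Real.Gamma_pos_of_pos (hb.trans hbc))
    (mul_pos (Real.Gamma_pos_of_pos hb) (Real.Gamma_pos_of_pos (sub_pos.2 hbc)))

theorem hyper_eq_euler (a x : ℝ) (hb : 0 < b) (hbc : b < c) :
    hyper a b c x = Real.Gamma c / (Real.Gamma b * Real.Gamma (c - b)) *
      ∫ t in (0 : ℝ)..1, t ^ (b - 1) * (1 - t) ^ (c - b - 1) * (1 - x * t) ^ (-a) :=
  if_pos ⟨hbc, hb⟩

theorem hyper_pos (a : ℝ) (hb : 0 < b) (hbc : b < c) (hx : x < 1) : 0 < hyper a b c x := by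
  rw [hyper_eq_euler a x hb hbc]
  refine mul_pos (euler_factor_pos hb hbc) ?_
  refine intervalIntegral.intervalIntegral_pos_of_pos_on (intervalIntegrable_euler _ hb hbc hx)
    (fun t ht => ?_) zero_lt_one
  exact mul_pos (euler_weight_pos b c ht)
    (rpow_pos_of_pos (one_sub_mul_pos hx (Ioo_subset_Icc_self ht)) _)

theorem hyper_lt_mul_hyper {k u v : ℝ} (hb : 0 < b) (hbc : b < c) (hu : u < 1) (hv : v < 1)
    (h : ∀ t ∈ Ioo (0 : ℝ) 1, (1 - u * t) ^ (-a) < k * (1 - v * t) ^ (-a)) :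
    hyper a b c u < k * hyper a b c v := by
  rw [hyper_eq_euler a u hb hbc, hyper_eq_euler a v hb hbc, mul_left_comm]
  refine mul_lt_mul_of_pos_left ?_ (euler_factor_pos hb hbc)
  rw [← intervalIntegral.integral_const_mul k]
  refine intervalIntegral_lt_of_lt_on_Ioo zero_lt_one (intervalIntegrable_euler _ hb hbc hu)
    ((intervalIntegrable_euler _ hb hbc hv).const_mul k) fun t ht => ?_
  rw [mul_left_comm]
  exact mul_lt_mul_of_pos_left (h t ht) (euler_weight_pos b c ht)

theorem hyper_strictAntiOn (ha : a < 0) (hb : 0 < b) (hbc : b < c) :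
    StrictAntiOn (hyper a b c) (Iio 1) := by
  intro v hv u hu hvu
  rw [← one_mul (hyper a b c v)]
  refine hyper_lt_mul_hyper hb hbc hu hv fun t ht => ?_
  rw [one_mul]
  exact rpow_lt_rpow (one_sub_mul_pos hu (Ioo_subset_Icc_self ht)).le
    (sub_lt_sub_left (mul_lt_mul_of_pos_right hvu ht.1) 1) (neg_pos.2 ha)

theorem hyper_lt_one_sub_rpow_mul_hyper_zero (ha : a < 0) (hb : 0 < b) (hbc : b < c)
    (hx : x < 0) : hyper a b c x < (1 - x) ^ (-a) * hyper a b c 0 := by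
  have hx1 : x < 1 := hx.trans zero_lt_one
  refine hyper_lt_mul_hyper hb hbc hx1 zero_lt_one fun t ht => ?_
  rw [zero_mul, sub_zero, one_rpow, mul_one]
  refine rpow_lt_rpow (one_sub_mul_pos hx1 (Ioo_subset_Icc_self ht)).le ?_ (neg_pos.2 ha)
  exact sub_lt_sub_left (lt_mul_of_lt_one_right hx ht.2) 1

end Hypergeometric

section Coefficients

variable {t x : ℝ}

theorem aCoef_neg (t : ℝ) : aCoef t < 0 := by
  have : t < √(t ^ 2 + 8) := lt_sqrt_of_sq_lt (by linarith)
  unfold aCoef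
  linarith

theorem bCoef_pos (t : ℝ) : 0 < bCoef t := by
  have : -t < √(t ^ 2 + 8) := lt_sqrt_of_sq_lt (by linarith [neg_sq t])
  unfold bCoef
  linarith

theorem sqrt_sq_add_eight_lt (ht : 1 < t) : √(t ^ 2 + 8) < t + 2 := by
  rw [sqrt_lt' (by linarith)]
  linarith [add_sq t 2]

theorem neg_one_lt_aCoef (ht : 1 < t) : -1 < aCoef t := by
  unfold aCoef
  linarith [sqrt_sq_add_eight_lt ht]

theorem bCoef_lt_add_one (ht : 1 < t) : bCoef t < t + 1 := by
  unfold bCoef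
  linarith [sqrt_sq_add_eight_lt ht]

theorem Fhyp_pos (ht : 1 < t) (hx : x < 1) : 0 < Fhyp t x :=
  hyper_pos _ (bCoef_pos t) (bCoef_lt_add_one ht) hx

theorem Fhyp_strictAntiOn (ht : 1 < t) : StrictAntiOn (Fhyp t) (Iio 1) :=
  hyper_strictAntiOn (aCoef_neg t) (bCoef_pos t) (bCoef_lt_add_one ht)

theorem Fhyp_lt_one_sub_mul_Fhyp_zero (ht : 1 < t) (hx : x < 0) :
    Fhyp t x < (1 - x) * Fhyp t 0 := by
  have hpow : (1 - x) ^ (-aCoef t) ≤ 1 - x :=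
    rpow_le_self_of_one_le (by linarith) (by linarith [neg_one_lt_aCoef ht])
  calc Fhyp t x < (1 - x) ^ (-aCoef t) * Fhyp t 0 :=
        hyper_lt_one_sub_rpow_mul_hyper_zero (aCoef_neg t) (bCoef_pos t) (bCoef_lt_add_one ht) hx
    _ ≤ (1 - x) * Fhyp t 0 :=
        mul_le_mul_of_nonneg_right hpow (Fhyp_pos ht zero_lt_one).le

theorem intervalIntegrable_Fhyp_mul (ht : 1 < t) (hx : x ≤ 0) :
    IntervalIntegrable (fun τ => Fhyp t (τ * x)) volume 0 1 := by
  refine MonotoneOn.intervalIntegrable fun σ hσ τ hτ hστ => ?_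
  rw [uIcc_of_le zero_le_one] at hσ hτ
  have hlt_one : ∀ ρ ∈ Icc (0 : ℝ) 1, ρ * x < 1 := fun ρ hρ =>
    (mul_nonpos_of_nonneg_of_nonpos hρ.1 hx).trans_lt zero_lt_one
  exact (Fhyp_strictAntiOn ht).antitoneOn (hlt_one τ hτ) (hlt_one σ hσ)
    (mul_le_mul_of_nonpos_right hστ hx)

end Coefficients

section Kernel

variable {f : ℝ → ℝ} {c x : ℝ}

theorem integral_const_mul_kernel (n : ℕ) (c x : ℝ) :
    ∫ τ in (0 : ℝ)..1, c * τ ^ n * (-1 + 2 * x * τ) =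
      c * (-(1 / ((n : ℝ) + 1)) + 2 * x / ((n : ℝ) + 2)) := by
  have hexpand : ∀ τ : ℝ, c * τ ^ n * (-1 + 2 * x * τ) =
      -c * τ ^ n + 2 * c * x * τ ^ (n + 1) := fun τ => by ring
  simp only [hexpand]
  rw [intervalIntegral.integral_add (Continuous.intervalIntegrable (by fun_prop) _ _)
      (Continuous.intervalIntegrable (by fun_prop) _ _),
    intervalIntegral.integral_const_mul, intervalIntegral.integral_const_mul,
    integral_pow, integral_pow]
  simp only [one_pow, zero_pow (Nat.succ_ne_zero _), sub_zero]
  push_cast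
  ring

theorem integral_mul_kernel_lt (n : ℕ) (hx : x ≤ 0) (hf : IntervalIntegrable f volume 0 1)
    (h : ∀ τ ∈ Ioo (0 : ℝ) 1, c < f τ) :
    ∫ τ in (0 : ℝ)..1, f τ * τ ^ n * (-1 + 2 * x * τ) <
      c * (-(1 / ((n : ℝ) + 1)) + 2 * x / ((n : ℝ) + 2)) := by
  rw [← integral_const_mul_kernel]
  refine intervalIntegral_lt_of_lt_on_Ioo zero_lt_one
    ((hf.mul_continuousOn (by fun_prop)).mul_continuousOn (by fun_prop))
    (Continuous.intervalIntegrable (by fun_prop) _ _) fun τ hτ => ?_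
  have hkernel : -1 + 2 * x * τ < 0 := by nlinarith [hτ.1]
  exact mul_lt_mul_of_neg_right (mul_lt_mul_of_pos_right (h τ hτ) (pow_pos hτ.1 n)) hkernel

theorem lt_integral_mul_kernel (n : ℕ) (hx : x ≤ 0) (hf : IntervalIntegrable f volume 0 1)
    (h : ∀ τ ∈ Ioo (0 : ℝ) 1, f τ < c) :
    c * (-(1 / ((n : ℝ) + 1)) + 2 * x / ((n : ℝ) + 2)) <
      ∫ τ in (0 : ℝ)..1, f τ * τ ^ n * (-1 + 2 * x * τ) := by
  have hneg := integral_mul_kernel_lt n hx hf.neg fun τ hτ => neg_lt_neg (h τ hτ)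
  simp only [Pi.neg_apply, neg_mul, intervalIntegral.integral_neg] at hneg
  exact neg_lt_neg_iff.1 hneg

end Kernel

/-- The affine function `𝒫_n`, with `F_n 𝒫_n` a lower bound for `ζ_n` on `(-∞, 0)`. -/
noncomputable def lowerAffine (A B : ℝ) (n : ℕ) (x : ℝ) : ℝ :=
  (n : ℝ) / ((n : ℝ) + 1)
    + x * (-(n : ℝ) / ((n : ℝ) + 2) + (A + 2 * B) / (A * ((n : ℝ) + 1)))

/-- The slope of the affine function `𝒬_n`. -/
noncomputable def upperSlope (A B : ℝ) (n : ℕ) : ℝ :=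
  (A + 2 * B) / (A * ((n : ℝ) + 1)) - ((n : ℝ) + 1) / ((n : ℝ) + 2)

/-- The affine function `𝒬_n` with root `x_⋆`, such that `F_n 𝒬_n` is an upper bound for `ζ_n` on
`(-1, 0)`. -/
noncomputable def upperAffine (A B : ℝ) (n : ℕ) (x : ℝ) : ℝ :=
  (2 * (n : ℝ) + 1) / (2 * ((n : ℝ) + 1)) + x * upperSlope A B n

section Localization

variable {A B x : ℝ} {n : ℕ}

theorem Fhyp_mul_lowerAffine_lt_zetaDisp (A B : ℝ) (hn : 1 < n) (hx : x < 0) :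
    Fhyp n x * lowerAffine A B n x < zetaDisp A B n x := by
  have ht : (1 : ℝ) < n := by exact_mod_cast hn
  have hF : ∀ τ ∈ Ioo (0 : ℝ) 1, Fhyp n (τ * x) < Fhyp n x := fun τ hτ =>
    Fhyp_strictAntiOn ht (hx.trans zero_lt_one)
      ((mul_neg_of_pos_of_neg hτ.1 hx).trans zero_lt_one) (lt_mul_of_lt_one_left hx hτ.2)
  have hintegral := lt_integral_mul_kernel n hx.le (intervalIntegrable_Fhyp_mul ht hx.le) hF
  have hconst : (n : ℝ) / (n + 1) = 1 - 1 / (n + 1) := by field_simp; ring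
  have hslope : -(n : ℝ) / (n + 2) = -1 + 2 / (n + 2) := by field_simp; ring
  unfold zetaDisp lowerAffine
  rw [hconst, hslope]
  linear_combination hintegral

theorem zetaDisp_lt_Fhyp_mul_upperAffine (A B : ℝ) (hn : 1 < n) (hx : x ∈ Ioo (-1 : ℝ) 0) :
    zetaDisp A B n x < Fhyp n x * upperAffine A B n x := by
  have ht : (1 : ℝ) < n := by exact_mod_cast hn
  have hF_zero : Fhyp n x / 2 < Fhyp n 0 := by
    nlinarith [Fhyp_lt_one_sub_mul_Fhyp_zero ht hx.2, Fhyp_pos ht zero_lt_one, hx.1]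
  have hF : ∀ τ ∈ Ioo (0 : ℝ) 1, Fhyp n x / 2 < Fhyp n (τ * x) := fun τ hτ =>
    have hτx : τ * x < 0 := mul_neg_of_pos_of_neg hτ.1 hx.2
    hF_zero.trans (Fhyp_strictAntiOn ht (hτx.trans zero_lt_one) (mem_Iio.2 zero_lt_one) hτx)
  have hintegral :=
    integral_mul_kernel_lt n hx.2.le (intervalIntegrable_Fhyp_mul ht hx.2.le) hF
  have hconst : (2 * (n : ℝ) + 1) / (2 * (n + 1)) = 1 - 1 / (n + 1) / 2 := by field_simp; ring
  have hslope : ((n : ℝ) + 1) / (n + 2) = 1 - 1 / (n + 2) := by field_simp; ring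
  unfold zetaDisp upperAffine upperSlope
  rw [hconst, hslope]
  linear_combination hintegral

theorem lowerAffine_neg_of_zetaDisp_eq_zero (hn : 1 < n) (hx : x < 0)
    (hzero : zetaDisp A B n x = 0) : lowerAffine A B n x < 0 := by
  have hF : 0 < Fhyp n x := Fhyp_pos (by exact_mod_cast hn) (hx.trans zero_lt_one)
  exact neg_of_mul_neg_right (hzero ▸ Fhyp_mul_lowerAffine_lt_zetaDisp A B hn hx) hF.le

theorem upperAffine_pos_of_zetaDisp_eq_zero (hn : 1 < n) (hx : x ∈ Ioo (-1 : ℝ) 0)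
    (hzero : zetaDisp A B n x = 0) : 0 < upperAffine A B n x := by
  have hF : 0 < Fhyp n x := Fhyp_pos (by exact_mod_cast hn) (hx.2.trans zero_lt_one)
  exact pos_of_mul_pos_right (hzero ▸ zetaDisp_lt_Fhyp_mul_upperAffine A B hn hx) hF.le

theorem upperSlope_pos_of_lowerAffine_neg (hn : 0 < n) (hx : x ∈ Ioo (-1 : ℝ) 0)
    (hneg : lowerAffine A B n x < 0) : 0 < upperSlope A B n := by
  have hn' : (1 : ℝ) ≤ n := by exact_mod_cast hn
  unfold lowerAffine at hneg
  unfold upperSlope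
  set κ := (A + 2 * B) / (A * ((n : ℝ) + 1))
  have hconst_pos : 0 < (n : ℝ) / (n + 1) := by positivity
  have hslope_pos : 0 < -(n : ℝ) / (n + 2) + κ :=
    pos_of_mul_neg_right (by linarith) hx.2.le
  have hconst_lt : (n : ℝ) / (n + 1) < -(n : ℝ) / (n + 2) + κ := by
    nlinarith [hx.1]
  have hfrac : 1 / ((n : ℝ) + 2) < n / (n + 1) := by
    rw [div_lt_div_iff₀ (by linarith) (by linarith)]
    nlinarith
  have hsplit : ((n : ℝ) + 1) / (n + 2) = 1 / (n + 2) - -n / (n + 2) := by ring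
  linarith

theorem neg_mul_inv_upperSlope_lt (hslope : 0 < upperSlope A B n)
    (hpos : 0 < upperAffine A B n x) :
    -((2 * (n : ℝ) + 1) / (2 * ((n : ℝ) + 1))) * (upperSlope A B n)⁻¹ < x := by
  rw [← div_eq_mul_inv, div_lt_iff₀ hslope]
  unfold upperAffine at hpos
  linarith

theorem natCast_add_mul_neg_of_lowerAffine_neg (hA : A ≠ 0) (hn : 1 < n) (hx : x < 0)
    (hneg : lowerAffine A B n x < 0) : (n : ℝ) + 2 * (B / A) * x < 0 := by
  have hn' : (2 : ℝ) ≤ n := by exact_mod_cast hn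
  have hclear : ((n : ℝ) + 1) * lowerAffine A B n x =
      n + 2 * (B / A) * x + -x * (n * (n + 1) / (n + 2) - 1) := by
    unfold lowerAffine
    field_simp
    ring
  have hcoef : 1 ≤ (n : ℝ) * (n + 1) / (n + 2) := by
    rw [one_le_div (by linarith)]
    nlinarith
  have hprod : ((n : ℝ) + 1) * lowerAffine A B n x < 0 :=
    mul_neg_of_pos_of_neg (by linarith) hneg
  have hrest : 0 ≤ -x * (n * (n + 1) / (n + 2) - 1) :=
    mul_nonneg (neg_nonneg.2 hx.le) (sub_nonneg.2 hcoef)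
  linarith

theorem lt_neg_div_of_lowerAffine_neg (hA : A ≠ 0) (hn : 1 < n) (hx : x < 0)
    (hneg : lowerAffine A B n x < 0) : x < -A / (2 * B) := by
  have hn' : (1 : ℝ) < n := by exact_mod_cast hn
  have hlinear : (n : ℝ) + 2 * (B / A) * x < 0 :=
    natCast_add_mul_neg_of_lowerAffine_neg hA hn hx hneg
  have hratio : 0 < 2 * (B / A) := pos_of_mul_neg_left (by linarith) hx.le
  have hbound : x < -1 / (2 * (B / A)) := by
    rw [lt_div_iff₀ hratio]
    linarith
  calc x < -1 / (2 * (B / A)) := hbound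
    _ = -A / (2 * B) := by rw [← mul_div_assoc, div_div_eq_mul_div, neg_one_mul]

end Localization

theorem zetaDisp_zero_localization_general (A B : ℝ) (hA : A ≠ 0)
    (n : ℕ) (hn : 2 ≤ n) (xn : ℝ) (hxn : xn < 0) (hzero : zetaDisp A B n xn = 0) :
    lowerAffine A B n xn < 0 ∧
    (xn ∈ Ioo (-1 : ℝ) 0 →
      -((2 * (n : ℝ) + 1) / (2 * ((n : ℝ) + 1))) * (upperSlope A B n)⁻¹ < xn) ∧
    xn < -A / (2 * B) := by
  have hneg : lowerAffine A B n xn < 0 := lowerAffine_neg_of_zetaDisp_eq_zero hn hxn hzero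
  refine ⟨hneg, fun hxn' => ?_, lt_neg_div_of_lowerAffine_neg hA hn hxn hneg⟩
  exact neg_mul_inv_upperSlope_lt (upperSlope_pos_of_lowerAffine_neg (by lia) hxn' hneg)
    (upperAffine_pos_of_zetaDisp_eq_zero hn hxn' hzero)

/-- localization of any negative zero `x_n` of `ζ_n` when `A,B>0`. -/
theorem zetaDisp_zero_localization (A B : ℝ) (hA : 0 < A) (hB : 0 < B)
    (n : ℕ) (hn : 2 ≤ n) (xn : ℝ) (hxn : xn < 0) (hzero : zetaDisp A B n xn = 0) :
    -- (1) 𝒫_n(x_n) < 0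
    (n : ℝ) / ((n : ℝ) + 1)
        + xn * (-(n : ℝ) / ((n : ℝ) + 2) + (A + 2 * B) / (A * ((n : ℝ) + 1))) < 0 ∧
    -- (2) if x_n ∈ (-1,0) then x_⋆ < x_n
    (xn ∈ Ioo (-1 : ℝ) 0 →
      -((2 * (n : ℝ) + 1) / (2 * ((n : ℝ) + 1))) *
          ((A + 2 * B) / (A * ((n : ℝ) + 1)) - ((n : ℝ) + 1) / ((n : ℝ) + 2))⁻¹ < xn) ∧
    -- (3) x_n < -A/(2B)
    xn < -A / (2 * B) :=
  zetaDisp_zero_localization_general A B hA.ne' n hn xn hxn hzero
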